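/- Let Q be a Weyl candidate on Minkowski space V with electric part 𝓔(Q) and magnetic part 𝓑(Q) with respect to a unit timelike vector n, let h be the spatial metric and ε the spatial volume form. Let v ∈ V, set 𝒜 := η(n,v) and let v⊥ := v + η(n,v)n be its spatial part. Define the symmetric bilinear form T(y,w) := Q(v,y,v,w). Then the orthogonal splitting parts of T are: 𝔯(T) := T(n,n) = 𝓔(Q)(v⊥,v⊥); the spatial covector part satisfies 𝔧(T)_μ = −ε_{μκπ} 𝓑(Q)_{λ}^{ π} v⊥^{λ} v⊥^{κ} − 𝒜 𝓔(Q)_{μλ} v⊥^{λ}; and the spatial symmetric part satisfies 𝔱(T)_{μν} = v⊥^{κ}( −2 v⊥_{(ν} 𝓔(Q)_{μ)κ} + h_{μν} 𝓔(Q)_{κπ} v⊥^{π} + 2𝒜 𝓑(Q)_{(μ}^{ π} ε_{ν)κπ} ) + 𝓔(Q)_{μν}( v⊥_{κ} v⊥^{κ} + 𝒜² ), where round brackets denote symmetrization with weight ½. -/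

import Mathlib

noncomputable section

/-- Minkowski space `V = ℝ⁴`. -/
abbrev V4 : Type := Fin 4 → ℝ

/-- The Minkowski bilinear form of signature `(-,+,+,+)`. -/
def η (x y : V4) : ℝ := -(x 0 * y 0) + x 1 * y 1 + x 2 * y 2 + x 3 * y 3

/-- The standard basis of `V4`. -/
def e4 (a : Fin 4) : V4 := Pi.single a 1

/-- Components of the Minkowski metric `diag(-1,1,1,1)` (its own inverse). -/
def ηm (a b : Fin 4) : ℝ := if a = b then (if a = (0 : Fin 4) then -1 else 1) else 0

/-- A 4-linear form on `V4`, given by its components in the standard basis. -/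
abbrev T4 : Type := Fin 4 → Fin 4 → Fin 4 → Fin 4 → ℝ

/-- A bilinear form on `V4`, given by its components in the standard basis. -/
abbrev T2 : Type := Fin 4 → Fin 4 → ℝ

/-- Evaluation of a 4-linear form (given by components) on vectors. -/
def eval4 (W : T4) (x y z w : V4) : ℝ :=
  ∑ a : Fin 4, ∑ b : Fin 4, ∑ c : Fin 4, ∑ d : Fin 4, W a b c d * x a * y b * z c * w d

/-- The alternating volume 4-form with `vol(e₀,e₁,e₂,e₃) = 1`. -/
def volv (x y z w : V4) : ℝ := Matrix.det (Matrix.of ![x, y, z, w])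

/-- Components `η_{αβγδ}` of the volume form. -/
def volc (a b c d : Fin 4) : ℝ := volv (e4 a) (e4 b) (e4 c) (e4 d)

/-- Left dual `(*W)_{μνλρ} = ½ η_{μν}{}^{αβ} W_{αβλρ}`. -/
def leftDual (W : T4) : T4 := fun μ ν lam ρ =>
  (1/2) * ∑ γ : Fin 4, ∑ δ : Fin 4, ∑ a : Fin 4, ∑ b : Fin 4,
    volc μ ν γ δ * ηm γ a * ηm δ b * W a b lam ρ

/-- Right dual `(W*)_{μνλρ} = ½ W_{μν}{}^{αβ} η_{αβλρ}`. -/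
def rightDual (W : T4) : T4 := fun μ ν lam ρ =>
  (1/2) * ∑ γ : Fin 4, ∑ δ : Fin 4, ∑ a : Fin 4, ∑ b : Fin 4,
    W μ ν a b * ηm a γ * ηm b δ * volc γ δ lam ρ

/-- A Weyl candidate: pair antisymmetries, pair exchange, first Bianchi, trace-free. -/
def IsWeyl (W : T4) : Prop :=
  (∀ x y z w : V4, eval4 W x y z w = - eval4 W y x z w) ∧
  (∀ x y z w : V4, eval4 W x y z w = - eval4 W x y w z) ∧
  (∀ x y z w : V4, eval4 W x y z w = eval4 W z w x y) ∧
  (∀ x y z w : V4, eval4 W x y z w + eval4 W x z w y + eval4 W x w y z = 0) ∧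
  (∀ x y : V4, ∑ a : Fin 4, ∑ b : Fin 4, ηm a b * eval4 W (e4 a) x (e4 b) y = 0)

/-- Electric part `E(W)_{ab} = W(e_a, n, e_b, n)`. -/
def Epart (W : T4) (n : V4) : T2 := fun a b => eval4 W (e4 a) n (e4 b) n

/-- Magnetic part `B(W)_{ab} = (W*)(e_a, n, e_b, n)`. -/
def Bpart (W : T4) (n : V4) : T2 := fun a b => eval4 (rightDual W) (e4 a) n (e4 b) n

/-- Raise both indices of a bilinear form's components. -/
def up2 (S : T2) : T2 := fun a b => ∑ c : Fin 4, ∑ d : Fin 4, ηm a c * ηm b d * S c d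

/-- Full contraction `S_{ab} T^{ab}`. -/
def contr2 (S T : T2) : ℝ := ∑ a : Fin 4, ∑ b : Fin 4, S a b * up2 T a b

/-- The Hodge dual of a 2-form given by its components. -/
def hodge2 (F : T2) : T2 := fun lam ρ =>
  (1/2) * ∑ γ : Fin 4, ∑ δ : Fin 4, ∑ a : Fin 4, ∑ b : Fin 4,
    F a b * ηm a γ * ηm b δ * volc γ δ lam ρ

/-- Evaluation of a bilinear form (given by components) on vectors. -/
def eval2 (F : T2) (x y : V4) : ℝ := ∑ a : Fin 4, ∑ b : Fin 4, F a b * x a * y b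

theorem eval4_add_smul_first (W : T4) (x u y z w : V4) (c : ℝ) :
    eval4 W (x + c • u) y z w = eval4 W x y z w + c * eval4 W u y z w := by
  simp only [eval4, Finset.mul_sum, ← Finset.sum_add_distrib, Pi.add_apply, Pi.smul_apply,
    smul_eq_mul]
  refine Finset.sum_congr rfl fun _ _ => Finset.sum_congr rfl fun _ _ =>
    Finset.sum_congr rfl fun _ _ => Finset.sum_congr rfl fun _ _ => ?_
  ring

theorem eval4_add_smul_third (W : T4) (x u y z w : V4) (c : ℝ) :
    eval4 W x y (z + c • u) w = eval4 W x y z w + c * eval4 W x y u w := by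
  simp only [eval4, Finset.mul_sum, ← Finset.sum_add_distrib, Pi.add_apply, Pi.smul_apply,
    smul_eq_mul]
  refine Finset.sum_congr rfl fun _ _ => Finset.sum_congr rfl fun _ _ =>
    Finset.sum_congr rfl fun _ _ => Finset.sum_congr rfl fun _ _ => ?_
  ring

theorem eval4_add_smul_fourth (W : T4) (x u y z w : V4) (c : ℝ) :
    eval4 W x y z (w + c • u) = eval4 W x y z w + c * eval4 W x y z u := by
  simp only [eval4, Finset.mul_sum, ← Finset.sum_add_distrib, Pi.add_apply, Pi.smul_apply,
    smul_eq_mul]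
  refine Finset.sum_congr rfl fun _ _ => Finset.sum_congr rfl fun _ _ =>
    Finset.sum_congr rfl fun _ _ => Finset.sum_congr rfl fun _ _ => ?_
  ring

theorem e4_apply (a b : Fin 4) : e4 a b = if b = a then 1 else 0 := by
  simp [e4, Pi.single_apply]

theorem eval4_basis (W : T4) (a b c d : Fin 4) :
    eval4 W (e4 a) (e4 b) (e4 c) (e4 d) = W a b c d := by
  simp [eval4, e4_apply]

theorem sum_eval4_first (W : T4) (x y z w : V4) :
    ∑ a, eval4 W (e4 a) y z w * x a = eval4 W x y z w := by
  simp [eval4, e4_apply, Fin.sum_univ_four]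
  ring

theorem sum_eval4_third (W : T4) (x y z w : V4) :
    ∑ c, eval4 W x y (e4 c) w * z c = eval4 W x y z w := by
  simp [eval4, e4_apply, Fin.sum_univ_four]
  ring

theorem eval4_eq_eval2 (W : T4) (x y z w : V4) :
    eval4 W x y z w = eval2 (fun c d => eval4 W x y (e4 c) (e4 d)) z w := by
  simp [eval4, eval2, e4_apply, Fin.sum_univ_four]
  ring

theorem volv_eq (x y z w : V4) : volv x y z w =
    (x 0 * y 1 - x 1 * y 0) * (z 2 * w 3 - z 3 * w 2)
    - (x 0 * y 2 - x 2 * y 0) * (z 1 * w 3 - z 3 * w 1)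
    + (x 0 * y 3 - x 3 * y 0) * (z 1 * w 2 - z 2 * w 1)
    + (x 1 * y 2 - x 2 * y 1) * (z 0 * w 3 - z 3 * w 0)
    - (x 1 * y 3 - x 3 * y 1) * (z 0 * w 2 - z 2 * w 0)
    + (x 2 * y 3 - x 3 * y 2) * (z 0 * w 1 - z 1 * w 0) := by
  simp [volv, Matrix.det_succ_row_zero, Fin.sum_univ_succ, Fin.succAbove]
  ring

theorem eval2_hodge2 (F : T2) (hF : ∀ a b, F a b = - F b a) (z w : V4) :
    eval2 (hodge2 F) z w =
     -F 0 1 * (z 2 * w 3 - z 3 * w 2) + F 0 2 * (z 1 * w 3 - z 3 * w 1)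
    - F 0 3 * (z 1 * w 2 - z 2 * w 1) + F 1 2 * (z 0 * w 3 - z 3 * w 0)
    - F 1 3 * (z 0 * w 2 - z 2 * w 0) + F 2 3 * (z 0 * w 1 - z 1 * w 0) := by
  have h : ∀ c d, hodge2 F c d = -F 0 1 * (e4 c 2 * e4 d 3 - e4 c 3 * e4 d 2)
    + F 0 2 * (e4 c 1 * e4 d 3 - e4 c 3 * e4 d 1)
    - F 0 3 * (e4 c 1 * e4 d 2 - e4 c 2 * e4 d 1) + F 1 2 * (e4 c 0 * e4 d 3 - e4 c 3 * e4 d 0)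
    - F 1 3 * (e4 c 0 * e4 d 2 - e4 c 2 * e4 d 0)
    + F 2 3 * (e4 c 0 * e4 d 1 - e4 c 1 * e4 d 0) := by
    intro c d
    simp [hodge2, ηm, volc, volv_eq, Fin.sum_univ_four, e4_apply 0, e4_apply 1, e4_apply 2,
      e4_apply 3]
    rw [hF 1 0, hF 2 0, hF 3 0, hF 2 1, hF 3 1, hF 3 2]
    ring
  simp [eval2, h, e4_apply, Fin.sum_univ_four]
  ring

theorem eval4_eq_sum_eval2 (W : T4) (x y z w : V4) :
    eval4 W x y z w = ∑ a, ∑ b, eval2 (W a b) z w * x a * y b := by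
  simp only [eval4, eval2, Finset.sum_mul]
  refine Finset.sum_congr rfl fun _ _ => Finset.sum_congr rfl fun _ _ =>
    Finset.sum_congr rfl fun _ _ => Finset.sum_congr rfl fun _ _ => ?_
  ring

theorem eval4_basis_right (W : T4) (x y : V4) (c d : Fin 4) :
    eval4 W x y (e4 c) (e4 d) = ∑ a, ∑ b, W a b c d * x a * y b := by
  simp [eval4, e4_apply]

theorem eval4_rightDual (W : T4) (hW : ∀ a b c d, W a b c d = - W a b d c) (x y z w : V4) :
    eval4 (rightDual W) x y z w =
      eval2 (hodge2 fun c d => eval4 W x y (e4 c) (e4 d)) z w := by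
  rw [eval4_eq_sum_eval2, eval2_hodge2]
  · simp only [show ∀ a b, rightDual W a b = hodge2 (W a b) from fun _ _ => rfl,
      eval2_hodge2 _ (hW _ _), eval4_basis_right, neg_mul, Finset.sum_mul,
      ← Finset.sum_add_distrib, ← Finset.sum_sub_distrib, ← Finset.sum_neg_distrib]
    refine Finset.sum_congr rfl fun _ _ => Finset.sum_congr rfl fun _ _ => ?_
    ring
  · intro c d
    simp only [eval4_basis_right, ← Finset.sum_neg_distrib]
    refine Finset.sum_congr rfl fun a _ => Finset.sum_congr rfl fun b _ => ?_
    rw [hW a b c d]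
    ring

/-- Contracting the spatial volume form with the magnetic part of a 2-form recovers the
spatial part of the 2-form, up to sign. -/
theorem sum_volv_mul_hodge2 (F : T2) (hF : ∀ a b, F a b = - F b a) (n y z : V4) :
    ∑ p, ∑ q, volv n y z (e4 p) * ηm p q * eval2 (hodge2 F) (e4 q) n =
      η n n * eval2 F y z - η n y * eval2 F n z - η n z * eval2 F y n := by
  have h0 : ∀ a, F a a = 0 := fun a => by linarith [hF a a]
  simp only [eval2_hodge2 F hF]
  simp only [volv_eq, eval2, η, ηm, Fin.sum_univ_four, h0]
  rw [hF 1 0, hF 2 0, hF 3 0, hF 2 1, hF 3 1, hF 3 2]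
  simp [e4_apply]
  ring

/-- The Plücker coordinates of `x ∧ y`. -/
def biv (x y : V4) (a b : Fin 4) : ℝ := x a * y b - x b * y a

/-- A Weyl candidate in terms of its ten independent components. -/
theorem IsWeyl.eval4_eq {Q : T4} (hQ : IsWeyl Q) (x y z w : V4) :
    eval4 Q x y z w =
      Q 0 1 0 1 * (biv x y 0 1 * biv z w 0 1 - biv x y 2 3 * biv z w 2 3)
    + Q 0 2 0 2 * (biv x y 0 2 * biv z w 0 2 - biv x y 1 3 * biv z w 1 3)
    - (Q 0 1 0 1 + Q 0 2 0 2) * (biv x y 0 3 * biv z w 0 3 - biv x y 1 2 * biv z w 1 2)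
    + Q 0 1 0 2 * (biv x y 0 1 * biv z w 0 2 + biv x y 0 2 * biv z w 0 1
        + biv x y 2 3 * biv z w 1 3 + biv x y 1 3 * biv z w 2 3)
    + Q 0 1 0 3 * (biv x y 0 1 * biv z w 0 3 + biv x y 0 3 * biv z w 0 1
        - biv x y 2 3 * biv z w 1 2 - biv x y 1 2 * biv z w 2 3)
    + Q 0 2 0 3 * (biv x y 0 2 * biv z w 0 3 + biv x y 0 3 * biv z w 0 2
        + biv x y 1 3 * biv z w 1 2 + biv x y 1 2 * biv z w 1 3)
    + Q 0 1 2 3 * (biv x y 0 1 * biv z w 2 3 + biv x y 2 3 * biv z w 0 1)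
    + Q 0 2 1 3 * (biv x y 0 2 * biv z w 1 3 + biv x y 1 3 * biv z w 0 2)
    + (Q 0 2 1 3 - Q 0 1 2 3) * (biv x y 0 3 * biv z w 1 2 + biv x y 1 2 * biv z w 0 3)
    + Q 0 1 1 2 * (biv x y 0 1 * biv z w 1 2 + biv x y 1 2 * biv z w 0 1
        + biv x y 0 3 * biv z w 2 3 + biv x y 2 3 * biv z w 0 3)
    + Q 0 1 1 3 * (biv x y 0 1 * biv z w 1 3 + biv x y 1 3 * biv z w 0 1
        - biv x y 0 2 * biv z w 2 3 - biv x y 2 3 * biv z w 0 2)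
    + Q 0 2 1 2 * (biv x y 0 2 * biv z w 1 2 + biv x y 1 2 * biv z w 0 2
        - biv x y 0 3 * biv z w 1 3 - biv x y 1 3 * biv z w 0 3) := by
  obtain ⟨h₁, h₂, h₃, h₄, h₅⟩ := hQ
  have k₁ : ∀ a b c d, Q a b c d = - Q b a c d := fun a b c d => by
    simpa only [eval4_basis] using h₁ (e4 a) (e4 b) (e4 c) (e4 d)
  have k₂ : ∀ a b c d, Q a b c d = - Q a b d c := fun a b c d => by
    simpa only [eval4_basis] using h₂ (e4 a) (e4 b) (e4 c) (e4 d)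
  have k₃ : ∀ a b c d, Q a b c d = Q c d a b := fun a b c d => by
    simpa only [eval4_basis] using h₃ (e4 a) (e4 b) (e4 c) (e4 d)
  have k₄ : Q 0 1 2 3 + Q 0 2 3 1 + Q 0 3 1 2 = 0 := by
    simpa only [eval4_basis] using h₄ (e4 0) (e4 1) (e4 2) (e4 3)
  have k₅ : ∀ a b, -Q 0 a 0 b + Q 1 a 1 b + Q 2 a 2 b + Q 3 a 3 b = 0 := fun a b => by
    simpa [eval4_basis, ηm, Fin.sum_univ_four] using h₅ (e4 a) (e4 b)
  have z₁ : ∀ a c d, Q a a c d = 0 := fun a c d => by linarith [k₁ a a c d]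
  have z₂ : ∀ a b c, Q a b c c = 0 := fun a b c => by linarith [k₂ a b c c]
  have t := And.intro (k₅ 0 0) <| And.intro (k₅ 0 1) <| And.intro (k₅ 0 2) <|
    And.intro (k₅ 0 3) <| And.intro (k₅ 1 1) <| And.intro (k₅ 2 2) <| And.intro (k₅ 3 3) <|
    And.intro (k₅ 1 2) <| And.intro (k₅ 1 3) <| And.intro (k₅ 2 3) k₄
  simp only [eval4, Fin.sum_univ_four]
  simp only [z₁, z₂, k₁ 1 0, k₁ 2 0, k₁ 3 0, k₁ 2 1, k₁ 3 1, k₁ 3 2,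
    k₂ _ _ 1 0, k₂ _ _ 2 0, k₂ _ _ 3 0, k₂ _ _ 2 1, k₂ _ _ 3 1, k₂ _ _ 3 2,
    k₃ 0 2 0 1, k₃ 0 3 0 1, k₃ 1 2 0 1, k₃ 1 3 0 1, k₃ 2 3 0 1,
    k₃ 0 3 0 2, k₃ 1 2 0 2, k₃ 1 3 0 2, k₃ 2 3 0 2, k₃ 1 2 0 3,
    k₃ 1 3 0 3, k₃ 2 3 0 3, k₃ 1 3 1 2, k₃ 2 3 1 2, k₃ 2 3 1 3] at t ⊢
  obtain ⟨t00, t01, t02, t03, t11, t22, t33, t12, t13, t23, t0⟩ := t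
  rw [show Q 2 3 2 3 = -Q 0 1 0 1 by linarith, show Q 1 3 1 3 = -Q 0 2 0 2 by linarith,
    show Q 1 2 1 2 = Q 0 1 0 1 + Q 0 2 0 2 by linarith,
    show Q 0 3 0 3 = -Q 0 1 0 1 - Q 0 2 0 2 by linarith,
    show Q 1 3 2 3 = Q 0 1 0 2 by linarith, show Q 1 2 2 3 = -Q 0 1 0 3 by linarith,
    show Q 1 2 1 3 = Q 0 2 0 3 by linarith, show Q 0 3 1 2 = Q 0 2 1 3 - Q 0 1 2 3 by linarith,
    show Q 0 3 2 3 = Q 0 1 1 2 by linarith, show Q 0 2 2 3 = -Q 0 1 1 3 by linarith,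
    show Q 0 3 1 3 = -Q 0 2 1 2 by linarith]
  simp only [biv]
  ring

set_option maxRecDepth 10000 in
set_option maxHeartbeats 4000000 in
/-- The contraction of a Weyl candidate with the generalized Kronecker delta of rank five, which
vanishes in dimension four. -/
theorem IsWeyl.dim_identity {Q : T4} (hQ : IsWeyl Q) (v y w n : V4) :
    η v v * eval4 Q y n w n - η v w * eval4 Q y n v n + η v n * eval4 Q y n v w
    - η y v * eval4 Q v n w n + η y w * eval4 Q v n v n - η y n * eval4 Q v n v w
    + η n v * eval4 Q v y w n - η n w * eval4 Q v y v n + η n n * eval4 Q v y v w = 0 := by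
  simp only [hQ.eval4_eq, η, biv]
  ring

theorem η_comm (x y : V4) : η x y = η y x := by
  simp only [η]
  ring

theorem η_add_smul (x y u : V4) (c : ℝ) : η x (y + c • u) = η x y + c * η x u := by
  simp only [η, Pi.add_apply, Pi.smul_apply, smul_eq_mul]
  ring

theorem η_basis (a b : Fin 4) : η (e4 a) (e4 b) = ηm a b := by
  fin_cases a <;> fin_cases b <;> simp [η, ηm, e4_apply]

theorem sum_ηm_mul (x : V4) (a : Fin 4) : ∑ b, ηm a b * x b = η x (e4 a) := by
  fin_cases a <;> simp [η, ηm, e4_apply]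

theorem sum_η_basis_mul (x y : V4) : ∑ a, η x (e4 a) * y a = η x y := by
  simp [η, e4_apply, Fin.sum_univ_four]

theorem sum_volv_third (x y z w : V4) :
    ∑ c, volv x y (e4 c) w * z c = volv x y z w := by
  simp [volv_eq, e4_apply, Fin.sum_univ_four]
  ring

theorem sum_mul_factor_contraction (G g B : T2) (u : V4) :
    ∑ κ, ∑ p, ∑ q, ∑ l, G κ p * g p q * B l q * u l * u κ =
      ∑ p, ∑ q, (∑ κ, G κ p * u κ) * g p q * ∑ l, B l q * u l := by
  simp only [Fin.sum_univ_four]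
  ring

theorem sum_mul_factor_splitting (a b h A : ℝ) (Eμ Eν Bμ Bν u : V4) (E g Gμ Gν : T2) :
    ∑ κ, u κ * (-(a * Eμ κ + b * Eν κ) + h * (∑ p, E κ p * u p)
      + A * ∑ p, ((∑ q, g p q * Bμ q) * Gν κ p + (∑ q, g p q * Bν q) * Gμ κ p)) =
    -(a * (∑ κ, Eμ κ * u κ) + b * (∑ κ, Eν κ * u κ)) + h * (∑ κ, (∑ p, E κ p * u p) * u κ)
      + A * ((∑ p, ∑ q, (∑ κ, Gν κ p * u κ) * g p q * Bμ q)
        + ∑ p, ∑ q, (∑ κ, Gμ κ p * u κ) * g p q * Bν q) := by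
  simp only [Fin.sum_univ_four]
  ring

theorem IsWeyl.eval4_self_left {Q : T4} (hQ : IsWeyl Q) (x z w : V4) :
    eval4 Q x x z w = 0 := by
  linarith [hQ.1 x x z w]

theorem IsWeyl.eval4_self_right {Q : T4} (hQ : IsWeyl Q) (x y z : V4) :
    eval4 Q x y z z = 0 := by
  linarith [hQ.2.1 x y z z]

/-- The magnetic part determines the components of `Q` with one normal and three spatial
arguments. -/
theorem IsWeyl.sum_volv_mul_magnetic {Q : T4} (hQ : IsWeyl Q) {n : V4} (hn : η n n = -1)
    (x y z : V4) :
    ∑ p, ∑ q, volv n y z (e4 p) * ηm p q * eval4 (rightDual Q) x n (e4 q) n =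
      -eval4 Q x n (y + η n y • n) (z + η n z • n) := by
  have hQ₂ : ∀ a b c d, Q a b c d = - Q a b d c := fun a b c d => by
    simpa only [eval4_basis] using hQ.2.1 (e4 a) (e4 b) (e4 c) (e4 d)
  simp only [eval4_rightDual Q hQ₂]
  rw [sum_volv_mul_hodge2 _ (fun a b => hQ.2.1 _ _ _ _)]
  simp only [← eval4_eq_eval2, eval4_add_smul_third, eval4_add_smul_fourth,
    hQ.eval4_self_right, hn]
  ring

/-- The spatial components of `Q` are determined by its electric part. -/
theorem IsWeyl.eval4_spatial {Q : T4} (hQ : IsWeyl Q) {n : V4} (hn : η n n = -1)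
    {v y w : V4} (hv : η n v = 0) (hy : η n y = 0) (hw : η n w = 0) :
    eval4 Q v y v w = η v v * eval4 Q y n w n - η v w * eval4 Q y n v n
      - η v y * eval4 Q w n v n + η y w * eval4 Q v n v n := by
  have h := hQ.dim_identity v y w n
  rw [η_comm v n, η_comm y n, hv, hy, hw, hn, η_comm y v, hQ.2.2.1 v n w n] at h
  linarith

/-- orthogonal splitting of `T(y,w) = Q(v,y,v,w)` for a Weyl candidate `Q`. -/
theorem stmt_2 (Q : T4) (hQ : IsWeyl Q) (n : V4) (hn : η n n = -1)
    (v : V4) (A : ℝ) (hA : A = η n v) (vp : V4) (hvp : vp = v + η n v • n)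
    (T : V4 → V4 → ℝ) (hT : ∀ y w, T y w = eval4 Q v y v w)
    -- spatial projector
    (P : V4 → V4) (hP : ∀ x, P x = x + η n x • n)
    -- the orthogonal splitting parts of the symmetric bilinear form T
    (rT : ℝ) (hrT : rT = T n n)
    (jT : Fin 4 → ℝ) (hjT : ∀ μ, jT μ = -(T n (P (e4 μ))))
    (tT : T2) (htT : ∀ μ ν, tT μ ν = T (P (e4 μ)) (P (e4 ν)))
    -- electric and magnetic parts of Q, spatial metric, spatial volume form, lowered v⊥
    (EQ BQ : T2) (hEQ : EQ = Epart Q n) (hBQ : BQ = Bpart Q n)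
    (hsp : T2) (hhsp : hsp = fun a b => ηm a b + η n (e4 a) * η n (e4 b))
    (εc : Fin 4 → Fin 4 → Fin 4 → ℝ) (hεc : ∀ a b c, εc a b c = volv n (e4 a) (e4 b) (e4 c))
    (vlow : Fin 4 → ℝ) (hvlow : ∀ ν, vlow ν = ∑ a : Fin 4, ηm ν a * vp a) :
    -- 𝔯(T) = 𝓔(Q)(v⊥,v⊥)
    rT = eval4 Q vp n vp n ∧
    -- 𝔧(T)_μ = −ε_{μκπ} 𝓑(Q)_λ{}^π v⊥^λ v⊥^κ − 𝒜 𝓔(Q)_{μλ} v⊥^λ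
    (∀ μ, jT μ =
      -(∑ κ : Fin 4, ∑ π : Fin 4, ∑ π' : Fin 4, ∑ lam : Fin 4,
          εc μ κ π * ηm π π' * BQ lam π' * vp lam * vp κ)
      - A * (∑ lam : Fin 4, EQ μ lam * vp lam)) ∧
    -- 𝔱(T)_{μν}
    (∀ μ ν, tT μ ν =
      (∑ κ : Fin 4, vp κ *
        (-(vlow ν * EQ μ κ + vlow μ * EQ ν κ)
          + hsp μ ν * (∑ π : Fin 4, EQ κ π * vp π)
          + A * (∑ π : Fin 4,
              ((∑ π' : Fin 4, ηm π π' * BQ μ π') * εc ν κ π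
                + (∑ π' : Fin 4, ηm π π' * BQ ν π') * εc μ κ π))))
      + EQ μ ν * ((∑ κ : Fin 4, vlow κ * vp κ) + A ^ 2)) := by
  have hn' : ∀ x, η n (P x) = 0 := fun x => by rw [hP, η_add_smul, hn]; ring
  have hvpP : vp = P v := by rw [hvp, hP]
  have hnvp : η n vp = 0 := hvpP ▸ hn' v
  have hPvp : P vp = vp := by rw [hP, hnvp, zero_smul, add_zero]
  have hv : v = vp + (-A) • n := by rw [hvp, hA, neg_smul, add_neg_cancel_right]
  have hηvpP : ∀ x, η vp (P x) = η vp x := fun x => by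
    rw [hP, η_add_smul, η_comm vp n, hnvp, mul_zero, add_zero]
  have hQP : ∀ x z w, eval4 Q (P x) n z w = eval4 Q x n z w := fun x z w => by
    rw [hP, eval4_add_smul_first, hQ.eval4_self_left, mul_zero, add_zero]
  have hQP' : ∀ x y z, eval4 Q x y (P z) n = eval4 Q x y z n := fun x y z => by
    rw [hP, eval4_add_smul_third, hQ.eval4_self_right, mul_zero, add_zero]
  have hmag : ∀ x y, ∑ p, ∑ q, volv n y vp (e4 p) * ηm p q * eval4 (rightDual Q) x n (e4 q) n =
      -eval4 Q x n (P y) vp := fun x y => by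
    rw [hQ.sum_volv_mul_magnetic hn, ← hP, ← hP, hPvp]
  have hE : ∀ μ, ∑ l, EQ μ l * vp l = eval4 Q (e4 μ) n vp n := fun μ => by
    rw [hEQ]; exact sum_eval4_third Q _ _ _ _
  have hvlow' : ∀ ν, vlow ν = η vp (e4 ν) := fun ν => by rw [hvlow, sum_ηm_mul]
  refine ⟨?_, fun μ => ?_, fun μ ν => ?_⟩
  · rw [hrT, hT, hvpP, hQP, hQP']
  · rw [sum_mul_factor_contraction (εc μ), hE, hjT, hT]
    simp only [hεc, hBQ, Bpart, sum_volv_third, sum_eval4_first, hmag]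
    rw [hv, eval4_add_smul_first, eval4_add_smul_third, hQ.eval4_self_left,
      hQ.2.1 vp n n, hQP', hQ.2.2.1 vp n (e4 μ) n, hQ.2.1 vp n (P (e4 μ)) vp]
    ring
  · rw [sum_mul_factor_splitting (Eμ := EQ μ) (Eν := EQ ν) (Gμ := εc μ) (Gν := εc ν)]
    simp only [hE, hvlow', sum_η_basis_mul, sum_eval4_first, hεc, hBQ, Bpart, sum_volv_third,
      hmag]
    have hspP : hsp μ ν = η (P (e4 μ)) (P (e4 ν)) := by
      rw [hP (e4 ν), η_add_smul, η_comm _ n, hn', hP, η_comm, η_add_smul, η_comm _ (e4 μ), η_basis,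
        η_comm _ n, hhsp]
      ring
    have hEμν : EQ μ ν = eval4 Q (e4 μ) n (e4 ν) n := by rw [hEQ, Epart]
    rw [htT, hT, hv, eval4_add_smul_first, eval4_add_smul_third, eval4_add_smul_third,
      hQ.eval4_spatial hn hnvp (hn' _) (hn' _), hηvpP, hηvpP, ← hspP, hEμν,
      hQ.2.2.1 vp (P (e4 μ)) n, hQ.1 n (P (e4 ν)), hQ.1 n (P (e4 μ)), hQ.1 n (P (e4 μ)),
      hQ.2.1 _ _ n (P (e4 ν))]
    simp only [hQP, hQP']
    rw [hQ.2.1 (e4 μ) n vp (P (e4 ν)), hQ.2.1 (e4 ν) n vp (P (e4 μ))]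
    ring
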